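/- Let ι be a finite type. For every u ∈ R and every a ∈ ι: δ_{0,a}(∂u) = 0, and for every k ≥ 1, δ_{k,a}(∂u) = δ_{k-1,a}(u). -/

import Mathlib

open MvPolynomial

/-- The higher Euler operator `δ_{k,a} u = ∑_i (-1)^i binom(k+i,k) ∂^i(∂_{k+i,a} u)`. -/
noncomputable def eulerOp {ι : Type*}
    (D : Derivation ℂ (MvPolynomial (ι × ℕ) ℂ) (MvPolynomial (ι × ℕ) ℂ))
    (k : ℕ) (a : ι) (u : MvPolynomial (ι × ℕ) ℂ) : MvPolynomial (ι × ℕ) ℂ :=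
  ∑ᶠ i : ℕ, ((-1 : ℂ) ^ i * ((k + i).choose k : ℂ)) • (⇑D)^[i] (pderiv (a, k + i) u)

/-!
The commutator of `∂_{n,a}` with the total derivative `∂` is `∂_{n-1,a}`, and `0` for `n = 0`.
Moving `∂` past `∂_{k+i,a}` turns the alternating sum `δ_{k,a} (∂ u)` into two sums. For `k = 0`
they cancel. For `k ≥ 1` Pascal's rule splits the second one into `δ_{k-1,a} u` and a part that
cancels the first.
-/

open Filter

/-- The alternating binomial sum `∑_i (-1)^i binom(k+i,k) D^i (p (k+i))` of a sequence `p` in a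
module. For `p n = ∂_{n,a} u` and `D` the total derivative it is the higher Euler operator
`δ_{k,a} u`, over any ring of coefficients. As a `finsum` it is `0` if infinitely many terms are
nonzero. -/
noncomputable def higherEulerSum (R : Type*) {M F : Type*} [Ring R] [AddCommGroup M] [Module R M]
    [FunLike F M M] (D : F) (k : ℕ) (p : ℕ → M) : M :=
  ∑ᶠ i : ℕ, ((-1 : R) ^ i * ((k + i).choose k : R)) • (⇑D)^[i] (p (k + i))

section Sequences

variable {R M F : Type*} [Ring R] [AddCommGroup M] [Module R M] [FunLike F M M]
  [AddMonoidHomClass F M M] {D : F} {p q : ℕ → M}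

theorem higherEulerSum_eq_sum_range (k : ℕ) {N : ℕ} (hp : ∀ n ≥ N, p n = 0) :
    higherEulerSum R D k p =
      ∑ i ∈ Finset.range N, ((-1 : R) ^ i * ((k + i).choose k : R)) • (⇑D)^[i] (p (k + i)) := by
  refine finsum_eq_sum_of_support_subset _ fun i hi ↦ ?_
  contrapose! hi
  have hNi : N ≤ i := by simpa using hi
  simp [hp (k + i) (by omega), iterate_map_zero]

theorem sum_range_succ_neg_one_pow_smul_iterate (hq_zero : q 0 = D (p 0))
    (hq_succ : ∀ n, q (n + 1) = D (p (n + 1)) + p n) (N : ℕ) :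
    ∑ i ∈ Finset.range (N + 1), (-1 : R) ^ i • (⇑D)^[i] (q i) =
      (-1 : R) ^ N • (⇑D)^[N + 1] (p N) := by
  induction N with
  | zero => simp [hq_zero]
  | succ N ih =>
    rw [Finset.sum_range_succ, ih, hq_succ, iterate_map_add, ← Function.iterate_succ_apply,
      pow_succ, mul_neg_one, neg_smul, neg_smul, smul_add]
    abel

theorem sum_range_choose_smul_iterate_succ_add (hq_succ : ∀ n, q (n + 1) = D (p (n + 1)) + p n)
    (k N : ℕ) :
    ∑ i ∈ Finset.range N,
          ((-1 : R) ^ i * ((k + 1 + i).choose (k + 1) : R)) • (⇑D)^[i] (q (k + 1 + i)) +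
        ((-1 : R) ^ N * ((k + N).choose (k + 1) : R)) • (⇑D)^[N] (p (k + N)) =
      ∑ i ∈ Finset.range N, ((-1 : R) ^ i * ((k + i).choose k : R)) • (⇑D)^[i] (p (k + i)) := by
  induction N with
  | zero => simp
  | succ N ih =>
    have pascal : ((k + N + 1).choose (k + 1) : R) =
        (k + N).choose k + (k + N).choose (k + 1) := by
      rw [Nat.choose_succ_succ, Nat.cast_add]
    rw [Finset.sum_range_succ, Finset.sum_range_succ, ← ih, Nat.add_right_comm k 1 N, hq_succ,
      iterate_map_add, ← Function.iterate_succ_apply, ← add_assoc k N 1, pascal, pow_succ]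
    simp only [mul_add, add_smul, smul_add, mul_neg, mul_one, neg_mul, neg_smul]
    abel

theorem exists_common_vanishing_bound (hp : ∀ᶠ n in atTop, p n = 0)
    (hq_succ : ∀ n, q (n + 1) = D (p (n + 1)) + p n) :
    ∃ N, (∀ n ≥ N, p n = 0) ∧ ∀ n ≥ N + 1, q n = 0 := by
  obtain ⟨N, hN⟩ := eventually_atTop.1 hp
  refine ⟨N, hN, fun n hn ↦ ?_⟩
  obtain ⟨m, rfl⟩ := Nat.exists_eq_add_one_of_ne_zero (show n ≠ 0 by omega)
  rw [hq_succ, hN _ (by omega), hN _ (by omega), map_zero, add_zero]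

theorem higherEulerSum_zero_eq_zero (hp : ∀ᶠ n in atTop, p n = 0) (hq_zero : q 0 = D (p 0))
    (hq_succ : ∀ n, q (n + 1) = D (p (n + 1)) + p n) :
    higherEulerSum R D 0 q = 0 := by
  obtain ⟨N, hpN, hqN⟩ := exists_common_vanishing_bound hp hq_succ
  calc higherEulerSum R D 0 q
      = ∑ i ∈ Finset.range (N + 1), (-1 : R) ^ i • (⇑D)^[i] (q i) := by
        simp [higherEulerSum_eq_sum_range 0 hqN]
    _ = (-1 : R) ^ N • (⇑D)^[N + 1] (p N) :=
        sum_range_succ_neg_one_pow_smul_iterate hq_zero hq_succ N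
    _ = 0 := by rw [hpN N le_rfl, iterate_map_zero, smul_zero]

theorem higherEulerSum_succ_eq (hp : ∀ᶠ n in atTop, p n = 0)
    (hq_succ : ∀ n, q (n + 1) = D (p (n + 1)) + p n) (k : ℕ) :
    higherEulerSum R D (k + 1) q = higherEulerSum R D k p := by
  obtain ⟨N, hpN, hqN⟩ := exists_common_vanishing_bound hp hq_succ
  have hpN' : ∀ n ≥ N + 1, p n = 0 := fun n hn ↦ hpN n (by omega)
  rw [higherEulerSum_eq_sum_range _ hqN, higherEulerSum_eq_sum_range _ hpN',
    ← sum_range_choose_smul_iterate_succ_add hq_succ, hpN (k + (N + 1)) (by omega),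
    iterate_map_zero, smul_zero, add_zero]

end Sequences

section JetVariables

variable {R ι : Type*}

theorem eventually_pderiv_eq_zero [CommSemiring R] (a : ι) (u : MvPolynomial (ι × ℕ) R) :
    ∀ᶠ n in atTop, pderiv (a, n) u = 0 := by
  have hvars : {n | (a, n) ∈ u.vars}.Finite :=
    u.vars.finite_toSet.preimage (Prod.mk_right_injective a).injOn
  rw [← Nat.cofinite_eq_atTop]
  exact hvars.eventually_cofinite_notMem.mono fun n hn ↦ pderiv_eq_zero_of_notMem_vars hn

variable [CommRing R] {D : Derivation R (MvPolynomial (ι × ℕ) R) (MvPolynomial (ι × ℕ) R)}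

theorem commutator_pderiv_zero (hD : ∀ (a : ι) (k : ℕ), D (X (a, k)) = X (a, k + 1)) (a : ι) :
    ⁅pderiv (R := R) (a, 0), D⁆ = 0 := by
  classical
  refine derivation_ext fun ⟨b, j⟩ ↦ ?_
  simp [Derivation.commutator_apply, hD, pderiv_X, Pi.single_apply, apply_ite D]

theorem commutator_pderiv_succ (hD : ∀ (a : ι) (k : ℕ), D (X (a, k)) = X (a, k + 1)) (a : ι)
    (n : ℕ) : ⁅pderiv (R := R) (a, n + 1), D⁆ = pderiv (a, n) := by
  classical
  refine derivation_ext fun ⟨b, j⟩ ↦ ?_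
  simp [Derivation.commutator_apply, hD, pderiv_X, Pi.single_apply, apply_ite D]

theorem pderiv_zero_totalDerivative (hD : ∀ (a : ι) (k : ℕ), D (X (a, k)) = X (a, k + 1))
    (a : ι) (u : MvPolynomial (ι × ℕ) R) :
    pderiv (a, 0) (D u) = D (pderiv (a, 0) u) := by
  rw [← sub_eq_zero, ← Derivation.commutator_apply, commutator_pderiv_zero hD,
    Derivation.zero_apply]

theorem pderiv_succ_totalDerivative (hD : ∀ (a : ι) (k : ℕ), D (X (a, k)) = X (a, k + 1))
    (a : ι) (u : MvPolynomial (ι × ℕ) R) (n : ℕ) :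
    pderiv (a, n + 1) (D u) = D (pderiv (a, n + 1) u) + pderiv (a, n) u := by
  rw [← sub_eq_iff_eq_add', ← Derivation.commutator_apply, commutator_pderiv_succ hD]

theorem stmt_7_general (hD : ∀ (a : ι) (k : ℕ), D (X (a, k)) = X (a, k + 1))
    (u : MvPolynomial (ι × ℕ) R) (a : ι) :
    higherEulerSum R D 0 (fun n ↦ pderiv (a, n) (D u)) = 0 ∧
      ∀ k : ℕ, 1 ≤ k → higherEulerSum R D k (fun n ↦ pderiv (a, n) (D u)) =
        higherEulerSum R D (k - 1) (fun n ↦ pderiv (a, n) u) := by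
  have hu := eventually_pderiv_eq_zero a u
  have h_succ := pderiv_succ_totalDerivative hD a u
  refine ⟨higherEulerSum_zero_eq_zero hu (pderiv_zero_totalDerivative hD a u) h_succ,
    fun k hk ↦ ?_⟩
  obtain ⟨m, rfl⟩ := Nat.exists_eq_add_of_le' hk
  exact higherEulerSum_succ_eq hu h_succ m

end JetVariables

/-- `δ_{0,a} ∘ ∂ = 0` and `δ_{k,a} ∘ ∂ = δ_{k-1,a}` for `k ≥ 1`. -/
theorem stmt_7 (ι : Type*) [Fintype ι]
    (D : Derivation ℂ (MvPolynomial (ι × ℕ) ℂ) (MvPolynomial (ι × ℕ) ℂ))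
    (hD : ∀ (a : ι) (k : ℕ), D (X (a, k)) = X (a, k + 1))
    (u : MvPolynomial (ι × ℕ) ℂ) (a : ι) :
    eulerOp D 0 a (D u) = 0 ∧
      ∀ k : ℕ, 1 ≤ k → eulerOp D k a (D u) = eulerOp D (k - 1) a u := by
  exact stmt_7_general hD u a
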